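/- arXiv:1203.5678 — 10 statements merged into one kernel-verified Lean document; each statement's English description precedes it below -/
import Mathlib

section
/- Let d be a partial metric on a nonempty set X with associated metric e, let (x_n) be a sequence in X and let x ∈ X. Then e(x_n, x) → 0 as n → ∞ if and only if both d(x_n, x) → d(x,x) as n → ∞ and d(x_m, x_n) → d(x,x) as m, n → ∞ (doubly indexed convergence). -/
open Filter Topology

noncomputable section

/-- A partial metric on `X` (Matthews). -/
def IsPartialMetric {X : Type*} (d : X → X → ℝ) : Prop :=
  (∀ x y, 0 ≤ d x y) ∧
  (∀ x y, d x y = d y x) ∧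
  (∀ x y, max (d x x) (d y y) ≤ d x y) ∧
  (∀ x y z, d x z ≤ d x y + d y z - d y y) ∧
  (∀ x y, d x y = d x x → d x y = d y y → x = y)

/-- The (standard) metric associated to a partial metric. -/
def assocE {X : Type*} (d : X → X → ℝ) (x y : X) : ℝ :=
  2 * d x y - d x x - d y y

/-- Completeness of the associated metric space `(X, e)`:
every `e`-Cauchy sequence `e`-converges to some point. -/
def eComplete {X : Type*} (d : X → X → ℝ) : Prop :=
  ∀ u : ℕ → X,
    (∀ α : ℝ, 0 < α → ∃ p : ℕ, ∀ m n : ℕ, p ≤ m → p ≤ n → assocE d (u m) (u n) < α) →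
    ∃ x : X, Tendsto (fun n => assocE d (u n) x) atTop (nhds 0)

/-- `M(x,y) = max{d(x,y), d(x,Tx), d(y,Ty), (1/2)(d(x,Ty)+d(Tx,y))}`. -/
def Mfun {X : Type*} (d : X → X → ℝ) (T : X → X) (x y : X) : ℝ :=
  max (max (d x y) (max (d x (T x)) (d y (T y)))) ((d x (T y) + d (T x) y) / 2)

/-- A normal function `φ : [0,∞) → [0,∞)`. -/
def IsNormal (φ : ℝ → ℝ) : Prop :=
  (∀ t, 0 ≤ t → 0 ≤ φ t) ∧ φ 0 = 0 ∧ ∀ t, 0 < t → φ t < t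

/-- `limsup_{t→s⁺} φ(t) = inf_{ε>0} sup {φ(t) : s ≤ t < s+ε}`. -/
def rightLimsup (φ : ℝ → ℝ) (s : ℝ) : ℝ :=
  sInf {y : ℝ | ∃ ε : ℝ, 0 < ε ∧ y = sSup (φ '' Set.Ico s (s + ε))}

/-- `limsup_{t→s} φ(t) = inf_{ε>0} sup {φ(t) : t ∈ [0,∞), s-ε < t < s+ε}`. -/
def limsupAt (φ : ℝ → ℝ) (s : ℝ) : ℝ :=
  sInf {y : ℝ | ∃ ε : ℝ, 0 < ε ∧ y = sSup (φ '' (Set.Ioo (s - ε) (s + ε) ∩ Set.Ici 0))}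

/-- A right limit normal function. -/
def IsRightLimitNormal (φ : ℝ → ℝ) : Prop :=
  IsNormal φ ∧ ∀ s : ℝ, 0 < s → rightLimsup φ s < s

/-- A limit normal function. -/
def IsLimitNormal (φ : ℝ → ℝ) : Prop :=
  IsNormal φ ∧ ∀ s : ℝ, 0 < s → limsupAt φ s < s

/-- `liminf_{t→∞} ψ(t) = sup_{α ≥ 0} inf {ψ(t) : t ≥ α}`, computed in `EReal`. -/
def liminfAtInfty (ψ : ℝ → ℝ) : EReal :=
  ⨆ α : {a : ℝ // 0 ≤ a}, ⨅ t : {t : ℝ // (α : ℝ) ≤ t}, ((ψ t : ℝ) : EReal)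

/-- `ψ` is semi-coercive: `liminf_{t→∞} ψ(t) > 0`. -/
def SemiCoercive (ψ : ℝ → ℝ) : Prop := 0 < liminfAtInfty ψ

/-- characterization of `e`-convergence in terms of `d`. -/
theorem assocE_tendsto_iff {X : Type*} [Nonempty X] (d : X → X → ℝ)
    (hd : IsPartialMetric d) (x : ℕ → X) (a : X) :
    Tendsto (fun n => assocE d (x n) a) atTop (nhds 0) ↔
      (Tendsto (fun n => d (x n) a) atTop (nhds (d a a)) ∧
        ∀ α : ℝ, 0 < α → ∃ p : ℕ, ∀ m n : ℕ, p ≤ m → p ≤ n →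
          |d (x m) (x n) - d a a| < α) := by
  obtain ⟨_, hs, hm, ht, _⟩ := hd
  have h1 : ∀ u v, d u u ≤ d u v := fun u v => le_trans (le_max_left _ _) (hm u v)
  have h2 : ∀ u v, d v v ≤ d u v := fun u v => le_trans (le_max_right _ _) (hm u v)
  simp only [Metric.tendsto_atTop, Real.dist_eq, assocE]
  constructor
  · intro h
    refine ⟨fun α hα => ?_, fun α hα => ?_⟩
    · obtain ⟨p, hp⟩ := h α hα
      refine ⟨p, fun n hn => ?_⟩
      have := abs_lt.1 (hp n hn)
      have e1 := h1 (x n) a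
      have e2 := h2 (x n) a
      rw [abs_lt]
      constructor <;> linarith
    · obtain ⟨p, hp⟩ := h (α / 2) (by linarith)
      refine ⟨p, fun m n hm hn => ?_⟩
      have a1 := abs_lt.1 (hp n hn)
      have a2 := abs_lt.1 (hp m hm)
      have e1 := h1 (x n) a
      have e2 := h2 (x n) a
      have e3 := h1 (x m) a
      have e4 := h2 (x m) a
      have e5 := h1 (x m) (x n)
      have e6 := ht (x m) a (x n)
      rw [hs a (x n)] at e6
      rw [abs_lt]
      constructor <;> linarith
  · rintro ⟨h, h'⟩ α hα
    obtain ⟨p, hp⟩ := h (α / 3) (by linarith)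
    obtain ⟨q, hq⟩ := h' (α / 3) (by linarith)
    refine ⟨max p q, fun n hn => ?_⟩
    have a1 := abs_lt.1 (hp n (le_trans (le_max_left _ _) hn))
    have hqn := le_trans (le_max_right _ _) hn
    have a2 := abs_lt.1 (hq n n hqn hqn)
    rw [abs_lt]
    constructor <;> linarith
end
end

section
/- Let d be a partial metric on a nonempty set X with associated metric e, and let (x_n) be a sequence in X. Then (x_n) is e-Cauchy (i.e., e(x_m,x_n) → 0 as m, n → ∞) if and only if there exists γ ∈ ℝ with γ ≥ 0 such that d(x_m, x_n) → γ as m, n → ∞ (doubly indexed convergence). -/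
open Filter Topology

noncomputable section

/-- a sequence is `e`-Cauchy iff `d(x_m, x_n)` converges (doubly indexed). -/
theorem eCauchy_iff_dist_converges {X : Type*} [Nonempty X] (d : X → X → ℝ)
    (hd : IsPartialMetric d) (x : ℕ → X) :
    (∀ α : ℝ, 0 < α → ∃ p : ℕ, ∀ m n : ℕ, p ≤ m → p ≤ n →
        assocE d (x m) (x n) < α) ↔
      ∃ γ : ℝ, 0 ≤ γ ∧ ∀ α : ℝ, 0 < α → ∃ p : ℕ, ∀ m n : ℕ, p ≤ m → p ≤ n →
        |d (x m) (x n) - γ| < α := by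
  obtain ⟨h0, -, hm, -, -⟩ := hd
  have hl : ∀ a b, d a a ≤ d a b := fun a b => (le_max_left _ _).trans (hm a b)
  have hr : ∀ a b, d b b ≤ d a b := fun a b => (le_max_right _ _).trans (hm a b)
  unfold assocE
  constructor
  · intro h
    have hc : CauchySeq (fun n => d (x n) (x n)) := by
      rw [Metric.cauchySeq_iff]
      intro ε hε
      obtain ⟨p, hp⟩ := h ε hε
      refine ⟨p, fun m hm' n hn' => ?_⟩
      have h1 := hp m n hm' hn'
      have h2 := hl (x m) (x n)
      have h3 := hr (x m) (x n)
      rw [Real.dist_eq, abs_lt]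
      constructor <;> linarith
    obtain ⟨γ, hγ⟩ := cauchySeq_tendsto_of_complete hc
    refine ⟨γ, ge_of_tendsto' hγ (fun n => h0 _ _), fun α hα => ?_⟩
    obtain ⟨p, hp⟩ := h (α / 2) (by linarith)
    obtain ⟨q, hq⟩ := Metric.tendsto_atTop.1 hγ (α / 2) (by linarith)
    refine ⟨max p q, fun m n hm' hn' => ?_⟩
    have h1 := hp m n (le_of_max_le_left hm') (le_of_max_le_left hn')
    have h2 := hl (x m) (x n)
    have h3 := hr (x m) (x n)
    have h4 := hq m (le_of_max_le_right hm')
    rw [Real.dist_eq, abs_lt] at h4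
    rw [abs_lt]
    constructor <;> linarith [h4.1, h4.2]
  · rintro ⟨γ, -, h⟩ α hα
    obtain ⟨p, hp⟩ := h (α / 4) (by linarith)
    refine ⟨p, fun m n hm' hn' => ?_⟩
    have h1 := abs_lt.1 (hp m n hm' hn')
    have h2 := abs_lt.1 (hp m m hm' hm')
    have h3 := abs_lt.1 (hp n n hn' hn')
    linarith [h1.1, h1.2, h2.1, h2.2, h3.1, h3.2]
end
end

section
/- Let d be a partial metric on a nonempty set X with associated metric e, let (x_n)_{n ≥ 0} be a sequence in X, and let γ ≥ 0 be such that: d(x_n, x_n) → γ and d(x_n, x_{n+1}) → γ as n → ∞, with d(x_n,x_n) ≥ γ and d(x_n,x_{n+1}) ≥ γ for all sufficiently large n (e-semi-Cauchy). If (x_n) is not e-Cauchy, then there exist ε > 0, a rank j₀, and functions m, n : ℕ → ℕ such that: (1) j ≤ m(j) ≤ n(j) and d(x_{m(j)}, x_{n(j)}) ≥ γ + ε for all j ≥ j₀; (2) n(j) − m(j) ≥ 2 and d(x_{m(j)}, x_{n(j)−1}) < γ + ε for all sufficiently large j; (3) d(x_{m(j)}, x_{n(j)}) → γ + ε as j →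 ∞; (4) for each p, q ∈ {0,1}, d(x_{m(j)+p}, x_{n(j)+q}) → γ + ε as j → ∞. -/
open Filter Topology

noncomputable section

/-- structure of `e`-semi-Cauchy sequences which are not `e`-Cauchy. -/
theorem semiCauchy_not_cauchy {X : Type*} [Nonempty X] (d : X → X → ℝ)
    (hd : IsPartialMetric d) (x : ℕ → X) (γ : ℝ) (hγ : 0 ≤ γ)
    (hα : Tendsto (fun n => d (x n) (x n)) atTop (nhds γ))
    (hρ : Tendsto (fun n => d (x n) (x (n + 1))) atTop (nhds γ))
    (hge : ∃ k : ℕ, ∀ n : ℕ, k ≤ n →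
      γ ≤ d (x n) (x n) ∧ γ ≤ d (x n) (x (n + 1)))
    (hnc : ¬ (∀ α : ℝ, 0 < α → ∃ p : ℕ, ∀ m n : ℕ, p ≤ m → p ≤ n →
      assocE d (x m) (x n) < α)) :
    ∃ ε : ℝ, 0 < ε ∧ ∃ j₀ : ℕ, ∃ m n : ℕ → ℕ,
      (∀ j : ℕ, j₀ ≤ j →
        j ≤ m j ∧ m j ≤ n j ∧ γ + ε ≤ d (x (m j)) (x (n j))) ∧
      (∃ j₁ : ℕ, ∀ j : ℕ, j₁ ≤ j →
        2 ≤ n j - m j ∧ d (x (m j)) (x (n j - 1)) < γ + ε) ∧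
      Tendsto (fun j => d (x (m j)) (x (n j))) atTop (nhds (γ + ε)) ∧
      (∀ p q : ℕ, p ≤ 1 → q ≤ 1 →
        Tendsto (fun j => d (x (m j + p)) (x (n j + q))) atTop (nhds (γ + ε))) := by
  obtain ⟨h0, hsym, hmax, htri, -⟩ := hd
  obtain ⟨k, hk⟩ := hge
  push Not at hnc
  obtain ⟨α, hαpos, hbad⟩ := hnc
  have key : ∀ p : ℕ, ∃ m : ℕ, p ≤ m ∧ ∃ n, m ≤ n ∧ γ + α / 2 ≤ d (x m) (x n) := by
    intro p
    obtain ⟨m, n, hm, hn, hmn⟩ := hbad (max p k)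
    have h1 := (hk m (le_trans (le_max_right _ _) hm)).1
    have h2 := (hk n (le_trans (le_max_right _ _) hn)).1
    unfold assocE at hmn
    rcases le_total m n with h | h
    · exact ⟨m, le_trans (le_max_left _ _) hm, n, h, by linarith⟩
    · exact ⟨n, le_trans (le_max_left _ _) hn, m, h, by rw [hsym]; linarith⟩
  have key2 : ∀ p : ℕ, ∃ m n : ℕ, p ≤ m ∧ m ≤ n ∧ γ + α / 2 ≤ d (x m) (x n) ∧
      ∀ i, m ≤ i → i < n → d (x m) (x i) < γ + α / 2 := by
    classical
    intro p
    obtain ⟨m, hpm, hex⟩ := key p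
    refine ⟨m, Nat.find hex, hpm, (Nat.find_spec hex).1, (Nat.find_spec hex).2, ?_⟩
    intro i hi hlt
    have := Nat.find_min hex hlt
    by_contra hcon
    exact this ⟨hi, not_lt.mp hcon⟩
  choose m n hpm hmn hge hlt using key2
  have hm : Tendsto m atTop atTop := tendsto_atTop_mono hpm tendsto_id
  have hn : Tendsto n atTop atTop := tendsto_atTop_mono hmn hm
  have hα1 : Tendsto (fun i => d (x (i+1)) (x (i+1))) atTop (nhds γ) :=
    hα.comp (tendsto_add_atTop_nat 1)
  obtain ⟨r, hr⟩ : ∃ r : ℕ → ℝ, r = fun i => |d (x i) (x (i+1)) - d (x i) (x i)| +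
    |d (x i) (x (i+1)) - d (x (i+1)) (x (i+1))| := ⟨_, rfl⟩
  have hr0 : Tendsto r atTop (nhds 0) := by
    have := ((hρ.sub hα).abs).add ((hρ.sub hα1).abs)
    simpa [hr] using this
  have hrnn : ∀ i, 0 ≤ r i := by intro i; rw [hr]; positivity
  have hr1 : ∀ i, d (x i) (x (i+1)) - d (x i) (x i) ≤ r i := by
    intro i
    rw [hr]
    have := le_abs_self (d (x i) (x (i+1)) - d (x i) (x i))
    have := abs_nonneg (d (x i) (x (i+1)) - d (x (i+1)) (x (i+1)))
    simp only
    linarith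
  have hr2 : ∀ i, d (x i) (x (i+1)) - d (x (i+1)) (x (i+1)) ≤ r i := by
    intro i
    rw [hr]
    have := le_abs_self (d (x i) (x (i+1)) - d (x (i+1)) (x (i+1)))
    have := abs_nonneg (d (x i) (x (i+1)) - d (x i) (x i))
    simp only
    linarith
  have hev : ∀ᶠ j in atTop, 2 ≤ n j - m j ∧ d (x (m j)) (x (n j - 1)) < γ + α / 2 := by
    have e1 := (hα.comp hm).eventually_lt_const (show γ < γ + α / 2 by linarith)
    have e2 := (hρ.comp hm).eventually_lt_const (show γ < γ + α / 2 by linarith)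
    filter_upwards [e1, e2] with j h1 h2
    simp only [Function.comp] at h1 h2
    have hj := hmn j
    have a1 : n j ≠ m j := by
      intro h
      have := hge j
      rw [h] at this
      linarith
    have a2 : n j ≠ m j + 1 := by
      intro h
      have := hge j
      rw [h] at this
      linarith
    exact ⟨by omega, hlt j _ (by omega) (by omega)⟩
  have hn1 : Tendsto (fun j => n j - 1) atTop atTop := (tendsto_sub_atTop_nat 1).comp hn
  have h3 : Tendsto (fun j => d (x (m j)) (x (n j))) atTop (nhds (γ + α / 2)) := by
    have hup : Tendsto (fun j => γ + α / 2 + r (n j - 1)) atTop (nhds (γ + α / 2)) := by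
      simpa using (hr0.comp hn1).const_add (γ + α / 2)
    refine tendsto_of_tendsto_of_tendsto_of_le_of_le' tendsto_const_nhds hup
      (Eventually.of_forall hge) ?_
    filter_upwards [hev] with j hj
    have t := htri (x (m j)) (x (n j - 1)) (x (n j))
    have s := hr1 (n j - 1)
    have e : n j - 1 + 1 = n j := by omega
    rw [e] at s
    linarith [hj.2]
  have step : ∀ i y, ∀ p ≤ 1, |d (x (i + p)) y - d (x i) y| ≤ r i := by
    intro i y p hp
    interval_cases p
    · simpa using hrnn i
    · have t1 := htri (x (i+1)) (x i) y
      have t2 := htri (x i) (x (i+1)) y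
      rw [hsym (x (i+1)) (x i)] at t1
      rw [abs_le]
      constructor <;> linarith [hr1 i, hr2 i]
  refine ⟨α / 2, by linarith, 0, m, n, fun j _ => ⟨hpm j, hmn j, hge j⟩,
    eventually_atTop.mp hev, h3, ?_⟩
  intro p q hp hq
  have hz : Tendsto (fun j => d (x (m j + p)) (x (n j + q)) - d (x (m j)) (x (n j)))
      atTop (nhds 0) := by
    have hb : Tendsto (fun j => r (m j) + r (n j)) atTop (nhds 0) := by
      simpa using (hr0.comp hm).add (hr0.comp hn)
    refine squeeze_zero_norm (fun j => ?_) hb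
    rw [Real.norm_eq_abs]
    have s1 := abs_le.mp (step (m j) (x (n j + q)) p hp)
    have s2 := abs_le.mp (step (n j) (x (m j)) q hq)
    rw [hsym _ (x (m j)), hsym _ (x (m j))] at s2
    rw [abs_le]
    constructor <;> linarith [s1.1, s1.2, s2.1, s2.2]
  simpa using hz.add h3
end
end

section
/- Let d be a partial metric on a nonempty set X whose associated metric space (X,e) is complete, let φ : [0,∞) → [0,∞) be right limit normal, and let T : X → X be (M;c;φ)-contractive, i.e., d(Tx,Ty) ≤ max{φ(M(x,y)), c(x,y)} for all x, y ∈ X. Then for each x ∈ X: the sequence ρ_n := d(Tⁿx, Tⁿ⁺¹x) is nonincreasing, hence converges to some γ(x) ≥ 0; moreover the sequence α_n := d(Tⁿx, Tⁿx) also converges to γ(x), with α_n ≥ γ(x) for all sufficiently large n. -/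
open Filter Topology

noncomputable section

theorem aux_right {φ : ℝ → ℝ} (hφ : IsRightLimitNormal φ) {s : ℝ} (hs : 0 < s) :
    ∃ ε : ℝ, 0 < ε ∧ ∀ t, s ≤ t → t < s + ε → φ t < s := by
  have h := hφ.2 s hs
  unfold rightLimsup at h
  obtain ⟨y, ⟨ε, hε, rfl⟩, hy⟩ := exists_lt_of_csInf_lt (by exact ⟨_, 1, one_pos, rfl⟩) h
  refine ⟨ε, hε, fun t h1 h2 => lt_of_le_of_lt (le_csSup ?_ (Set.mem_image_of_mem φ (Set.mem_Ico.2 ⟨h1, h2⟩))) hy⟩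
  refine ⟨s + ε, ?_⟩
  rintro _ ⟨u, ⟨hu1, hu2⟩, rfl⟩
  have := hφ.1.2.2 u (by linarith)
  linarith

/-- for `(M;c;φ)`-contractive `T`, the sequence `ρ_n = d(Tⁿx, Tⁿ⁺¹x)` is
nonincreasing with limit `γ(x) ≥ 0`, and `α_n = d(Tⁿx, Tⁿx)` converges to the same `γ(x)`,
with `α_n ≥ γ(x)` for large `n`. -/
theorem picard_semiCauchy {X : Type*} [Nonempty X] (d : X → X → ℝ)
    (hd : IsPartialMetric d) (hcomp : eComplete d)
    (φ : ℝ → ℝ) (hφ : IsRightLimitNormal φ) (T : X → X)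
    (hT : ∀ x y : X, d (T x) (T y) ≤ max (φ (Mfun d T x y)) (max (d x x) (d y y)))
    (x : X) :
    ∃ γ : ℝ, 0 ≤ γ ∧
      (∀ n : ℕ, d (T^[n + 1] x) (T^[n + 2] x) ≤ d (T^[n] x) (T^[n + 1] x)) ∧
      Tendsto (fun n => d (T^[n] x) (T^[n + 1] x)) atTop (nhds γ) ∧
      Tendsto (fun n => d (T^[n] x) (T^[n] x)) atTop (nhds γ) ∧
      ∃ k : ℕ, ∀ n : ℕ, k ≤ n → γ ≤ d (T^[n] x) (T^[n] x) := by
  obtain ⟨h0, hsym, hmax, htri, -⟩ := hd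
  obtain ⟨u, hu⟩ : ∃ u : ℕ → X, u = fun n => T^[n] x := ⟨_, rfl⟩
  have hu' : ∀ n, T^[n] x = u n := fun n => by rw [hu]
  have hs : ∀ n, T (u n) = u (n + 1) := fun n => by
    rw [hu]; exact (Function.iterate_succ_apply' T n x).symm
  simp only [hu']
  have hl : ∀ a b, d a a ≤ d a b := fun a b => (le_max_left _ _).trans (hmax a b)
  have hr : ∀ a b, d b b ≤ d a b := fun a b => (le_max_right _ _).trans (hmax a b)
  have hM : ∀ n, Mfun d T (u n) (u (n + 1)) =
      max (d (u n) (u (n + 1))) (d (u (n + 1)) (u (n + 2))) := by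
    intro n
    unfold Mfun
    rw [hs, hs]
    have h1 := htri (u n) (u (n + 1)) (u (n + 2))
    have h2 := le_max_left (d (u n) (u (n + 1))) (d (u (n + 1)) (u (n + 2)))
    have h3 := le_max_right (d (u n) (u (n + 1))) (d (u (n + 1)) (u (n + 2)))
    rw [← max_assoc, max_self]
    exact max_eq_left (by linarith)
  have hanti : ∀ n, d (u (n + 1)) (u (n + 2)) ≤ d (u n) (u (n + 1)) := by
    intro n
    by_contra! hlt
    have h1 := hT (u n) (u (n + 1))
    rw [hM, hs, hs, max_eq_right hlt.le] at h1
    have h2 := hφ.1.2.2 _ (lt_of_le_of_lt (h0 _ _) hlt)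
    have h3 := hmax (u n) (u (n + 1))
    exact absurd h1 (not_le.2 (max_lt h2 (h3.trans_lt hlt)))
  have hA : Antitone (fun n => d (u n) (u (n + 1))) := antitone_nat_of_succ_le hanti
  have hbdd : BddBelow (Set.range (fun n => d (u n) (u (n + 1)))) :=
    ⟨0, by rintro _ ⟨n, rfl⟩; exact h0 _ _⟩
  have hlim := tendsto_atTop_ciInf hA hbdd
  obtain ⟨γ, hγ⟩ : ∃ γ, γ = ⨅ n, d (u n) (u (n + 1)) := ⟨_, rfl⟩
  rw [← hγ] at hlim
  have hge : ∀ n, γ ≤ d (u n) (u (n + 1)) := fun n => hγ ▸ ciInf_le hbdd n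
  have hγ0 : 0 ≤ γ := ge_of_tendsto' hlim (fun n => h0 _ _)
  have key : ∃ k : ℕ, ∀ n : ℕ, k ≤ n → γ ≤ d (u n) (u n) := by
    rcases hγ0.eq_or_lt with h | hpos
    · exact ⟨0, fun n _ => h ▸ h0 _ _⟩
    obtain ⟨ε, hε, hφε⟩ := aux_right hφ hpos
    obtain ⟨k, hk⟩ := eventually_atTop.1 (hlim.eventually (gt_mem_nhds (show γ < γ + ε by linarith)))
    refine ⟨k, fun n hn => ?_⟩
    by_contra! hlt
    have hf := hφε _ (hge n) (hk n hn)
    have h1 := hT (u n) (u n)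
    have hMM : Mfun d T (u n) (u n) = d (u n) (u (n + 1)) := by
      unfold Mfun
      rw [hs, max_self, max_eq_right (hl _ _), hsym (u (n + 1)) (u n)]
      exact max_eq_left (by linarith)
    rw [hMM, hs, max_self] at h1
    have h2 : d (u (n + 1)) (u (n + 1)) < γ := h1.trans_lt (max_lt hf hlt)
    have h3 := hT (u n) (u (n + 1))
    rw [hM, hs, hs, max_eq_left (hanti n)] at h3
    have h4 := h3.trans_lt (max_lt hf (max_lt hlt h2))
    exact absurd (hge (n + 1)) (not_le.2 h4)
  refine ⟨γ, hγ0, hanti, hlim, ?_, key⟩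
  obtain ⟨k, hk⟩ := key
  exact tendsto_of_tendsto_of_tendsto_of_le_of_le' tendsto_const_nhds hlim
    (eventually_atTop.2 ⟨k, hk⟩) (Eventually.of_forall fun n => hl _ _)
end
end

section
/- Let d be a partial metric on a nonempty set X whose associated metric space (X,e) is complete, let φ : [0,∞) → [0,∞) be right limit normal, and let T : X → X be (M;c;φ)-contractive, i.e., d(Tx,Ty) ≤ max{φ(M(x,y)), c(x,y)} for all x, y ∈ X. Then for each x ∈ X, with γ(x) := lim_n d(Tⁿx, Tⁿ⁺¹x), the doubly indexed sequence d(Tᵐx, Tⁿx) converges to γ(x) as m, n → ∞; in particular, the sequence (Tⁿx) is e-Cauchy. -/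
open Filter Topology

noncomputable section

theorem rl_aux (φ : ℝ → ℝ) (hφ : IsRightLimitNormal φ) (s : ℝ) (hs : 0 < s) :
    ∃ δ : ℝ, 0 < δ ∧ ∀ t, s ≤ t → t < s + δ → φ t ≤ s - δ := by
  obtain ⟨⟨_, _, h3⟩, h⟩ := hφ
  have h1 := h s hs
  unfold rightLimsup at h1
  obtain ⟨y, ⟨ε, hε, rfl⟩, hy⟩ := exists_lt_of_csInf_lt (by exact ⟨_, 1, one_pos, rfl⟩) h1
  refine ⟨min ε (s - sSup (φ '' Set.Ico s (s + ε))), lt_min hε (by linarith), ?_⟩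
  intro t ht1 ht2
  have hb : BddAbove (φ '' Set.Ico s (s + ε)) := by
    refine ⟨s + ε, ?_⟩
    rintro _ ⟨u, ⟨hu1, hu2⟩, rfl⟩
    have := h3 u (by linarith)
    linarith
  have hl := min_le_left ε (s - sSup (φ '' Set.Ico s (s + ε)))
  have hr := min_le_right ε (s - sSup (φ '' Set.Ico s (s + ε)))
  have := le_csSup hb ⟨t, ⟨ht1, by linarith⟩, rfl⟩
  linarith

theorem pic_aux {X : Type*} (d : X → X → ℝ)
    (hd : IsPartialMetric d)
    (φ : ℝ → ℝ) (hφ : IsRightLimitNormal φ) (T : X → X)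
    (hT : ∀ x y : X, d (T x) (T y) ≤ max (φ (Mfun d T x y)) (max (d x x) (d y y)))
    (u : ℕ → X) (hu : ∀ n, T (u n) = u (n + 1)) (γ : ℝ)
    (hγ : Tendsto (fun n => d (u n) (u (n + 1))) atTop (nhds γ)) :
    ∀ α : ℝ, 0 < α → ∃ p : ℕ, ∀ m n : ℕ, p ≤ m → p ≤ n →
        |d (u m) (u n) - γ| < α := by
  obtain ⟨d0, dsymm, dmax, dtri, _⟩ := hd
  have dl : ∀ x y, d x x ≤ d x y := fun x y => (le_max_left _ _).trans (dmax x y)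
  have dr : ∀ x y, d y y ≤ d x y := fun x y => (le_max_right _ _).trans (dmax x y)
  have hφle : ∀ t, 0 ≤ t → φ t ≤ t := by
    intro t ht
    rcases ht.eq_or_lt with rfl | h
    · exact hφ.1.2.1.le
    · exact (hφ.1.2.2 t h).le
  have hC : ∀ m n, d (u (m+1)) (u (n+1)) ≤
      max (φ (Mfun d T (u m) (u n))) (max (d (u m) (u m)) (d (u n) (u n))) := by
    intro m n
    have := hT (u m) (u n)
    rwa [hu, hu] at this
  have hM : ∀ n, Mfun d T (u n) (u n) = d (u n) (u (n+1)) := by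
    intro n
    have h1 := dl (u n) (u (n+1))
    have h2 := dsymm (u n) (u (n+1))
    unfold Mfun
    rw [hu, ← h2, max_self, max_eq_right h1, add_self_div_two, max_self]
  have hM' : ∀ n, Mfun d T (u n) (u (n+1)) =
      max (d (u n) (u (n+1))) (d (u (n+1)) (u (n+2))) := by
    intro n
    have h1 := dtri (u n) (u (n+1)) (u (n+2))
    unfold Mfun
    rw [hu, hu]
    have l1 := le_max_left (d (u n) (u (n+1))) (d (u (n+1)) (u (n+2)))
    have l2 := le_max_right (d (u n) (u (n+1))) (d (u (n+1)) (u (n+2)))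
    rw [max_eq_right l1]
    apply max_eq_left
    show (d (u n) (u (n+2)) + _) / 2 ≤ _
    linarith
  have ha : ∀ n, d (u (n+1)) (u (n+1)) ≤ max (φ (d (u n) (u (n+1)))) (d (u n) (u n)) := by
    intro n
    have := hC n n
    rwa [hM, max_self] at this
  have ha' : ∀ n, d (u (n+1)) (u (n+1)) ≤ d (u n) (u (n+1)) := fun n => dr _ _
  have hbs : ∀ n, d (u (n+1)) (u (n+2)) ≤ d (u n) (u (n+1)) := by
    intro n
    by_contra hlt
    push Not at hlt
    have h := hC n (n+1)
    rw [hM', max_eq_right hlt.le] at h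
    have h0 := d0 (u n) (u (n+1))
    have h1 := hφ.1.2.2 (d (u (n+1)) (u (n+2))) (by linarith)
    have h2 := dl (u n) (u (n+1))
    have h3 := ha' n
    rcases le_max_iff.1 h with h | h
    · change d (u (n+1)) (u (n+2)) ≤ _ at h
      linarith
    · change d (u (n+1)) (u (n+2)) ≤ _ at h
      rcases le_max_iff.1 h with h | h <;> linarith
  have hanti : Antitone (fun n => d (u n) (u (n + 1))) := antitone_nat_of_succ_le hbs
  have hge : ∀ n, γ ≤ d (u n) (u (n+1)) := fun n => hanti.le_of_tendsto hγ n
  have hγ0 : 0 ≤ γ := ge_of_tendsto' hγ (fun n => d0 _ _)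
  have hlt : ∀ η : ℝ, 0 < η → ∃ p, ∀ n, p ≤ n → d (u n) (u (n+1)) < γ + η := by
    intro η hη
    exact eventually_atTop.1 (hγ.eventually_lt_const (by linarith))
  have hag : ∃ p, ∀ n, p ≤ n → γ ≤ d (u n) (u n) := by
    rcases hγ0.eq_or_lt with h0 | hpos
    · exact ⟨0, fun n _ => by rw [← h0]; exact d0 _ _⟩
    obtain ⟨δ, hδ, hδ'⟩ := rl_aux φ hφ γ hpos
    obtain ⟨p, hp⟩ := hlt δ hδ
    refine ⟨p, fun n hn => ?_⟩
    by_contra hc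
    push Not at hc
    have f1 := hδ' _ (hge n) (hp n hn)
    have h2 : d (u (n+1)) (u (n+1)) < γ := by
      rcases le_max_iff.1 (ha n) with h | h <;> linarith
    have h := hC n (n+1)
    rw [hM', max_eq_left (hbs n)] at h
    have := hge (n+1)
    rcases le_max_iff.1 h with h | h
    · linarith
    · rcases le_max_iff.1 h with h | h <;> linarith
  obtain ⟨p0, hp0⟩ := hag
  intro ε hε
  obtain ⟨δ, hδ, hδ'⟩ := rl_aux φ hφ (γ + ε) (by linarith)
  obtain ⟨η, hη, hη1, hη2⟩ : ∃ η : ℝ, 0 < η ∧ 8 * η ≤ δ ∧ 8 * η ≤ ε :=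
    ⟨min δ ε / 8, by have := lt_min hδ hε; linarith,
      by have := min_le_left δ ε; linarith, by have := min_le_right δ ε; linarith⟩
  obtain ⟨p1, hp1⟩ := hlt η hη
  have key : ∀ m, max p0 p1 ≤ m → ∀ n, m ≤ n → d (u m) (u n) < γ + ε := by
    intro m hm n hn
    have hm0 := (le_max_left _ _).trans hm
    have hm1 := (le_max_right _ _).trans hm
    induction n, hn using Nat.le_induction with
    | base =>
      have := hp1 m hm1
      have := dl (u m) (u (m+1))
      linarith
    | succ n hn ih =>
      by_contra hc
      push Not at hc
      have am := hp0 m hm0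
      have am1 := hp0 (m+1) (by omega)
      have an := hp0 n (by omega)
      have an1 := hp0 (n+1) (by omega)
      have an2 := hp0 (n+2) (by omega)
      have bm := hp1 m hm1
      have bn := hp1 n (by omega)
      have bn1 : d (u (n+1)) (u (n+2)) < γ + η := hp1 (n+1) (by omega)
      have t1 := dtri (u m) (u n) (u (n+1))
      have t2 := dtri (u m) (u (n+1)) (u (n+2))
      have t3 := dtri (u (m+1)) (u m) (u (n+1))
      have t4 := dtri (u m) (u (m+1)) (u (n+1))
      have t5 := dtri (u (m+1)) (u (n+2)) (u (n+1))
      have s1 := dsymm (u m) (u (m+1))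
      have s2 := dsymm (u (n+1)) (u (n+2))
      have c := hC m (n+1)
      have M1 : γ + ε ≤ Mfun d T (u m) (u (n+1)) := by
        unfold Mfun
        exact hc.trans ((le_max_left _ _).trans (le_max_left _ _))
      have M2 : Mfun d T (u m) (u (n+1)) < γ + ε + δ := by
        unfold Mfun
        rw [hu, hu]
        change max _ ((d (u m) (u (n+2)) + _) / 2) < _
        refine max_lt (max_lt (by linarith) (max_lt (by linarith) ?_)) (by linarith)
        change d (u (n+1)) (u (n+2)) < _
        linarith
      have f := hδ' _ M1 M2
      have e1 := dl (u m) (u (m+1))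
      have e2 := dl (u (n+1)) (u (n+2))
      change d (u (m+1)) (u (n+2)) ≤ _ at c
      rcases le_max_iff.1 c with h | h
      · linarith
      · rcases le_max_iff.1 h with h | h <;> linarith
  refine ⟨max p0 p1, fun m n hm hn => ?_⟩
  have h1 := hp0 m ((le_max_left _ _).trans hm)
  have h2 := dl (u m) (u n)
  have h3 : d (u m) (u n) < γ + ε := by
    rcases le_total m n with h | h
    · exact key m hm n h
    · rw [dsymm]; exact key n hn m h
  rw [abs_lt]
  constructor <;> linarith

/-- for `(M;c;φ)`-contractive `T`, with `γ(x) = lim_n d(Tⁿx, Tⁿ⁺¹x)`,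
the doubly indexed sequence `d(Tᵐx, Tⁿx)` converges to `γ(x)`; in particular
the Picard sequence is `e`-Cauchy. -/
theorem picard_eCauchy {X : Type*} [Nonempty X] (d : X → X → ℝ)
    (hd : IsPartialMetric d) (hcomp : eComplete d)
    (φ : ℝ → ℝ) (hφ : IsRightLimitNormal φ) (T : X → X)
    (hT : ∀ x y : X, d (T x) (T y) ≤ max (φ (Mfun d T x y)) (max (d x x) (d y y)))
    (x : X) (γ : ℝ)
    (hγ : Tendsto (fun n => d (T^[n] x) (T^[n + 1] x)) atTop (nhds γ)) :
    (∀ α : ℝ, 0 < α → ∃ p : ℕ, ∀ m n : ℕ, p ≤ m → p ≤ n →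
        |d (T^[m] x) (T^[n] x) - γ| < α) ∧
    (∀ α : ℝ, 0 < α → ∃ p : ℕ, ∀ m n : ℕ, p ≤ m → p ≤ n →
        assocE d (T^[m] x) (T^[n] x) < α) := by
  have h := pic_aux d hd φ hφ T hT (fun n => T^[n] x)
    (fun n => (Function.iterate_succ_apply' T n x).symm) γ hγ
  refine ⟨h, fun α hα => ?_⟩
  obtain ⟨p, hp⟩ := h (α / 4) (by linarith)
  refine ⟨p, fun m n hm hn => ?_⟩
  have h1 := abs_lt.1 (hp m n hm hn)
  have h2 := abs_lt.1 (hp m m hm hm)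
  have h3 := abs_lt.1 (hp n n hn hn)
  unfold assocE
  linarith [h1.1, h1.2, h2.1, h2.2, h3.1, h3.2]
end
end

section
/- Let d be a partial metric on a nonempty set X whose associated metric space (X,e) is complete, let φ : [0,∞) → [0,∞) be right limit normal, and let T : X → X be (M;c;φ)-contractive, i.e., d(Tx,Ty) ≤ max{φ(M(x,y)), c(x,y)} for all x, y ∈ X. Then T is a d-Picard operator: for every x ∈ X there exists x* ∈ X such that e(Tⁿx, x*) → 0 as n → ∞ and d(x*, Tx*) = d(x*, x*), i.e., x* is a d-fixed point of T. -/
open Filter Topology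

noncomputable section

theorem rln_aux (φ : ℝ → ℝ) (hφ : IsRightLimitNormal φ) (s : ℝ) (hs : 0 < s) :
    ∃ δ : ℝ, 0 < δ ∧ ∀ t, 0 ≤ t → t < s + δ → φ t < s := by
  obtain ⟨⟨h0, h1, h2⟩, h3⟩ := hφ
  have h := h3 s hs
  unfold rightLimsup at h
  obtain ⟨y, ⟨ε, hε, rfl⟩, hy⟩ := exists_lt_of_csInf_lt (by exact ⟨_, 1, one_pos, rfl⟩) h
  refine ⟨ε, hε, fun t ht hts => ?_⟩
  rcases lt_or_ge t s with h | h
  · rcases ht.eq_or_lt with h' | h'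
    · rw [← h', h1]; exact hs
    · exact (h2 t h').trans h
  · refine lt_of_le_of_lt (le_csSup (s := φ '' Set.Ico s (s + ε)) ⟨s + ε, ?_⟩ ⟨t, ⟨h, hts⟩, rfl⟩) hy
    rintro _ ⟨r, ⟨hr1, hr2⟩, rfl⟩
    exact ((h2 r (hs.trans_le hr1)).trans hr2).le

/-- an `(M;c;φ)`-contractive map on a complete space is a `d`-Picard
operator: every Picard sequence `e`-converges to a `d`-fixed point. -/
theorem dPicard_operator {X : Type*} [Nonempty X] (d : X → X → ℝ)
    (hd : IsPartialMetric d) (hcomp : eComplete d)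
    (φ : ℝ → ℝ) (hφ : IsRightLimitNormal φ) (T : X → X)
    (hT : ∀ x y : X, d (T x) (T y) ≤ max (φ (Mfun d T x y)) (max (d x x) (d y y))) :
    ∀ x : X, ∃ xstar : X,
      Tendsto (fun n => assocE d (T^[n] x) xstar) atTop (nhds 0) ∧
      d xstar (T xstar) = d xstar xstar := by
  intro x
  obtain ⟨hnn, hsymm, hmax, htri, -⟩ := hd
  have hl : ∀ x y, d x x ≤ d x y := fun x y => (le_max_left _ _).trans (hmax x y)
  have hr : ∀ x y, d y y ≤ d x y := fun x y => (le_max_right _ _).trans (hmax x y)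
  have hφl : ∀ t, 0 < t → φ t < t := hφ.1.2.2
  obtain ⟨u, hu⟩ : ∃ u : ℕ → X, u = fun n => T^[n] x := ⟨_, rfl⟩
  have huT : ∀ n, T (u n) = u (n + 1) := by
    intro n; simp only [hu, Function.iterate_succ_apply']
  have hstep : ∀ m n, d (u (m+1)) (u (n+1)) ≤
      max (φ (Mfun d T (u m) (u n))) (max (d (u m) (u m)) (d (u n) (u n))) := by
    intro m n; rw [← huT, ← huT]; exact hT _ _
  have hM1 : ∀ n, Mfun d T (u n) (u n) = d (u n) (u (n+1)) := by
    intro n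
    unfold Mfun
    rw [huT, hsymm (u (n+1)) (u n), max_self, max_eq_right (hl _ _), add_self_div_two, max_self]
  have hM2 : ∀ n, Mfun d T (u n) (u (n+1)) =
      max (d (u n) (u (n+1))) (d (u (n+1)) (u (n+2))) := by
    intro n
    unfold Mfun
    rw [huT, huT, ← max_assoc, max_self]
    apply max_eq_left
    have h1 := htri (u n) (u (n+1)) (u (n+2))
    have h2 := le_max_left (d (u n) (u (n+1))) (d (u (n+1)) (u (n+2)))
    have h3 := le_max_right (d (u n) (u (n+1))) (d (u (n+1)) (u (n+2)))
    show (d (u n) (u (n+2)) + _) / 2 ≤ _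
    linarith
  have hanti : ∀ n, d (u (n+1)) (u (n+2)) ≤ d (u n) (u (n+1)) := by
    intro n
    by_contra! h
    have h1 := hstep n (n+1)
    rw [hM2, max_eq_right h.le] at h1
    have h2 := hφl _ ((hnn _ _).trans_lt h)
    have h3 := hmax (u n) (u (n+1))
    rcases le_max_iff.1 h1 with h4 | h4
    · exact absurd h4 (not_le.2 h2)
    · exact absurd (h4.trans h3) (not_le.2 h)
  have hb : ∀ n, d (u (n+1)) (u (n+2)) ≤ max (φ (d (u n) (u (n+1)))) (d (u n) (u n)) := by
    intro n
    have h1 := hstep n (n+1)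
    rw [hM2, max_eq_left (hanti n)] at h1
    have h2 := hstep n n
    rw [hM1, max_self] at h2
    refine h1.trans (max_le (le_max_left _ _) (max_le (le_max_right _ _) h2))
  obtain ⟨β, hβ⟩ : ∃ β, Tendsto (fun n => d (u n) (u (n+1))) atTop (𝓝 β) :=
    ⟨_, tendsto_atTop_ciInf (antitone_nat_of_succ_le hanti)
      ⟨0, by rintro _ ⟨n, rfl⟩; exact hnn _ _⟩⟩
  have hβle : ∀ n, β ≤ d (u n) (u (n+1)) := fun n =>
    (antitone_nat_of_succ_le hanti).le_of_tendsto hβ n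
  have hβ0 : 0 ≤ β := ge_of_tendsto' hβ (fun n => hnn _ _)
  have haβ : ∀ᶠ n in atTop, β ≤ d (u n) (u n) := by
    rcases hβ0.eq_or_lt with h | h
    · exact Eventually.of_forall fun n => h ▸ hnn _ _
    · obtain ⟨δ, hδ, H⟩ := rln_aux φ hφ β h
      filter_upwards [hβ.eventually_lt_const (show β < β + δ by linarith)] with n hn
      have h1 := H _ (hnn _ _) hn
      rcases le_max_iff.1 (hb n) with h4 | h4
      · linarith [hβle (n+1)]
      · exact (hβle (n+1)).trans h4
  have hkey : ∀ ε : ℝ, 0 < ε → ∃ N, ∀ m, N ≤ m → β ≤ d (u m) (u m) ∧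
      ∀ k, d (u m) (u (m+k)) < β + 2 * ε := by
    intro ε hε
    obtain ⟨δ, hδ, H⟩ := rln_aux φ hφ (β + ε) (by linarith)
    obtain ⟨η, hη, h1, h2⟩ : ∃ η, 0 < η ∧ η ≤ ε ∧ 2 * η ≤ δ :=
      ⟨min ε (δ/2), by positivity, min_le_left _ _, by linarith [min_le_right ε (δ/2)]⟩
    obtain ⟨N, hN⟩ := eventually_atTop.1
      (haβ.and (hβ.eventually_lt_const (show β < β + η by linarith)))
    refine ⟨N, fun m hm => ⟨(hN m hm).1, fun k => ?_⟩⟩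
    suffices h : d (u m) (u (m+k)) < β + ε + η by linarith
    have ham := (hN m hm).1
    have ham1 := (hN (m+1) (by omega)).1
    have hbm := (hN m hm).2
    induction k with
    | zero => linarith [hl (u m) (u (m+1)), show d (u m) (u (m+0)) = d (u m) (u m) from rfl]
    | succ k ih =>
      have hbk := (hN (m+k) (by omega)).2
      have hak := (hN (m+k) (by omega)).1
      have hMlt : Mfun d T (u m) (u (m+k)) < β + ε + δ := by
        unfold Mfun
        rw [huT, huT]
        have t1 := htri (u m) (u (m+k)) (u (m+k+1))
        have t2 := htri (u (m+1)) (u m) (u (m+k))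
        rw [hsymm (u (m+1)) (u m)] at t2
        refine max_lt (max_lt ?_ (max_lt ?_ ?_)) ?_ <;> linarith
      have hM0 : 0 ≤ Mfun d T (u m) (u (m+k)) :=
        (hnn (u m) (u (m+k))).trans ((le_max_left _ _).trans (le_max_left _ _))
      have h5 := H _ hM0 hMlt
      have h6 : d (u (m+1)) (u (m+k+1)) < β + ε := by
        refine (hstep m (m+k)).trans_lt (max_lt h5 (max_lt ?_ ?_))
        · linarith [hl (u m) (u (m+1))]
        · linarith [hl (u (m+k)) (u (m+k+1))]
      have t := htri (u m) (u (m+1)) (u (m+k+1))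
      show d (u m) (u (m+k+1)) < _
      linarith
  obtain ⟨z, hz⟩ := hcomp u (by
    intro α hα
    obtain ⟨N, hN⟩ := hkey (α/4) (by linarith)
    refine ⟨N, fun m n hm hn => ?_⟩
    have h1 := hN m hm
    have h2 := hN n hn
    unfold assocE
    rcases le_total m n with h | h
    · obtain ⟨k, rfl⟩ := Nat.exists_eq_add_of_le h
      linarith [h1.2 k]
    · obtain ⟨k, rfl⟩ := Nat.exists_eq_add_of_le h
      linarith [h2.2 k, hsymm (u (n+k)) (u n)])
  refine ⟨z, by simpa [hu] using hz, ?_⟩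
  by_contra hne
  have hlt : d z z < d z (T z) := lt_of_le_of_ne (hl _ _) (Ne.symm hne)
  -- limits
  have hdz : Tendsto (fun n => d (u n) z - d z z) atTop (𝓝 0) := by
    refine squeeze_zero (fun n => by linarith [hr (u n) z]) (fun n => ?_) hz
    unfold assocE; linarith [hl (u n) z]
  have hda : Tendsto (fun n => d (u n) z - d (u n) (u n)) atTop (𝓝 0) := by
    refine squeeze_zero (fun n => by linarith [hl (u n) z]) (fun n => ?_) hz
    unfold assocE; linarith [hr (u n) z]
  have haz : Tendsto (fun n => d (u n) (u n)) atTop (𝓝 (d z z)) := by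
    have := (hdz.sub hda).add_const (d z z)
    simp only [sub_zero, zero_add] at this
    exact this.congr fun n => by ring
  have haβ' : Tendsto (fun n => d (u n) (u n)) atTop (𝓝 β) :=
    tendsto_of_tendsto_of_tendsto_of_le_of_le' tendsto_const_nhds hβ haβ
      (Eventually.of_forall fun n => hl _ _)
  have hβz : β = d z z := tendsto_nhds_unique haβ' haz
  have hr0 : 0 < d z (T z) := (hnn z z).trans_lt hlt
  have hφr := hφl _ hr0
  obtain ⟨γ, hγ0, hγ1, hγ2⟩ : ∃ γ, 0 < γ ∧ d z z + 4 * γ ≤ d z (T z) ∧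
      φ (d z (T z)) + 4 * γ ≤ d z (T z) :=
    ⟨min ((d z (T z) - d z z)/4) ((d z (T z) - φ (d z (T z)))/4),
      lt_min (by linarith) (by linarith),
      by linarith [min_le_left ((d z (T z) - d z z)/4) ((d z (T z) - φ (d z (T z)))/4)],
      by linarith [min_le_right ((d z (T z) - d z z)/4) ((d z (T z) - φ (d z (T z)))/4)]⟩
  obtain ⟨N, hN⟩ := eventually_atTop.1
    ((hdz.eventually_lt_const hγ0).and ((hda.eventually_lt_const hγ0).and
      ((hβ.eventually_lt_const (show β < β + γ by linarith)))))
  obtain ⟨n1, n2, n3⟩ := hN N le_rfl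
  obtain ⟨m1, m2, m3⟩ := hN (N+1) (by omega)
  have hMz : Mfun d T (u N) z = d z (T z) := by
    unfold Mfun
    rw [huT]
    have t := htri (u N) z (T z)
    rw [max_eq_right (a := d (u N) (u (N+1))) (by linarith), max_eq_right (a := d (u N) z) (by linarith)]
    apply max_eq_left
    linarith
  have hf := hT (u N) z
  rw [hMz, huT] at hf
  have t := htri z (u (N+1)) (T z)
  rw [hsymm z (u (N+1))] at t
  have h7 : d (u (N+1)) (T z) ≤ d z (T z) - 2 * γ := by
    refine hf.trans (max_le (by linarith) (max_le ?_ (by linarith)))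
    linarith [hl (u N) z]
  linarith
end
end

section
/- Let d be a partial metric on a nonempty set X whose associated metric space (X,e) is complete, let φ : [0,∞) → [0,∞) be limit normal with ψ(t) := t − φ(t) semi-coercive, and let T : X → X be (M;b;φ)-contractive, i.e., d(Tx,Ty) ≤ max{φ(M(x,y)), b(x,y)} for all x, y ∈ X. Set θ := inf{d(z,z) : z ∈ X, d(z,Tz) = d(z,z)}. If z ∈ X satisfies d(z,Tz) = d(z,z) and d(z,z) = θ, then Tz = z. -/
open Filter Topology

noncomputable section

theorem phi_aux (φ : ℝ → ℝ) (hφ : IsLimitNormal φ) (s : ℝ) (hs : 0 < s) :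
    ∃ η c : ℝ, 0 < η ∧ c < s ∧ ∀ t, 0 ≤ t → s - η < t → t < s + η → φ t ≤ c := by
  obtain ⟨⟨h0, h00, hlt⟩, hl⟩ := hφ
  have h := hl s hs
  unfold limsupAt at h
  obtain ⟨y, ⟨ε, hε, rfl⟩, hy⟩ := exists_lt_of_csInf_lt (by exact ⟨_, 1, one_pos, rfl⟩) h
  refine ⟨ε, _, hε, hy, fun t ht h1 h2 => ?_⟩
  apply le_csSup
  · refine ⟨s + ε, ?_⟩
    rintro _ ⟨u, ⟨⟨hu1, hu2⟩, hu3⟩, rfl⟩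
    have hu3' : 0 ≤ u := hu3
    rcases hu3'.eq_or_lt with h | h
    · rw [← h, h00]; linarith
    · linarith [hlt u h]
  · exact ⟨t, ⟨⟨h1, h2⟩, ht⟩, rfl⟩

theorem orbit_aux {X : Type*} (d : X → X → ℝ)
    (hd : IsPartialMetric d) (hcomp : eComplete d)
    (φ : ℝ → ℝ) (hφ : IsLimitNormal φ)
    (T : X → X)
    (hT : ∀ x y : X, d (T x) (T y) ≤
      max (φ (Mfun d T x y)) ((d x x + d y y) / 2))
    (x : ℕ → X) (hx : ∀ n, x (n + 1) = T (x n)) :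
    ∃ w, d w (T w) = d w w ∧ ∀ n, d w w ≤ d (x n) (x (n + 1)) := by
  have hA := phi_aux φ hφ
  obtain ⟨⟨-, -, hlt⟩, -⟩ := hφ
  obtain ⟨hnn, hsym, hmax, htri, -⟩ := hd
  have hl : ∀ a b, d a a ≤ d a b := fun a b => (le_max_left _ _).trans (hmax a b)
  have hr : ∀ a b, d b b ≤ d a b := fun a b => (le_max_right _ _).trans (hmax a b)
  have hMnn : ∀ a b, 0 ≤ Mfun d T a b := fun a b =>
    (hnn a b).trans ((le_max_left _ _).trans (le_max_left _ _))
  have hM : ∀ n, Mfun d T (x n) (x (n+1)) = max (d (x n) (x (n+1))) (d (x (n+1)) (x (n+2))) := by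
    intro n
    unfold Mfun
    rw [← hx n, ← hx (n+1)]
    have h := htri (x n) (x (n+1)) (x (n+2))
    apply le_antisymm
    · refine max_le (max_le (le_max_left _ _) (le_refl _)) ?_
      have h1 := le_max_left (d (x n) (x (n+1))) (d (x (n+1)) (x (n+2)))
      have h2 := le_max_right (d (x n) (x (n+1))) (d (x (n+1)) (x (n+2)))
      change (d (x n) (x (n+2)) + d (x (n+1)) (x (n+1))) / 2 ≤ _
      linarith
    · exact (le_max_right _ _).trans (le_max_left _ _)
  have hstep : ∀ n, d (x (n+1)) (x (n+2)) ≤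
      max (φ (max (d (x n) (x (n+1))) (d (x (n+1)) (x (n+2)))))
        ((d (x n) (x n) + d (x (n+1)) (x (n+1))) / 2) := by
    intro n
    have h := hT (x n) (x (n+1))
    rw [hM, ← hx n, ← hx (n+1)] at h
    exact h
  have hdec : ∀ n, d (x (n+1)) (x (n+2)) ≤ d (x n) (x (n+1)) := by
    intro n
    by_contra! hc
    have h := hstep n
    rw [max_eq_right hc.le] at h
    have h1 := hlt _ (lt_of_le_of_lt (hnn _ _) hc)
    have h2 := hl (x n) (x (n+1))
    have h3 := hr (x n) (x (n+1))
    rcases le_max_iff.1 h with h | h <;> linarith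
  have hanti : Antitone (fun n => d (x n) (x (n+1))) := antitone_nat_of_succ_le hdec
  obtain ⟨δ, hδ⟩ : ∃ δ, Tendsto (fun n => d (x n) (x (n+1))) atTop (𝓝 δ) :=
    ⟨_, tendsto_atTop_ciInf hanti ⟨0, by rintro _ ⟨n, rfl⟩; exact hnn _ _⟩⟩
  have hδle : ∀ n, δ ≤ d (x n) (x (n+1)) := fun n => hanti.le_of_tendsto hδ n
  have hδ0 : 0 ≤ δ := ge_of_tendsto' hδ fun n => hnn _ _
  have hdlt : ∀ κ, 0 < κ → ∃ p, ∀ n, p ≤ n → d (x n) (x (n+1)) < δ + κ := by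
    intro κ hκ
    exact eventually_atTop.1 (hδ.eventually_lt_const (by linarith))
  have hrgt : ∀ κ, 0 < κ → ∃ p, ∀ n, p ≤ n → δ - κ < d (x n) (x n) := by
    intro κ hκ
    rcases hδ0.eq_or_lt with h0 | h0
    · exact ⟨0, fun n _ => by linarith [hnn (x n) (x n)]⟩
    · obtain ⟨η, c, hη, hc, hA⟩ := hA δ h0
      obtain ⟨p, hp⟩ := hdlt (min η κ) (lt_min hη hκ)
      refine ⟨p, fun n hn => ?_⟩
      have h := hstep n
      rw [max_eq_left (hdec n)] at h
      have h1 := hp n hn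
      have h2 := hp (n+1) (by omega)
      have h3 := min_le_left η κ
      have h4 := min_le_right η κ
      have h5 := hδle n
      have h6 : δ ≤ d (x (n+1)) (x (n+2)) := hδle (n+1)
      have h7 := hl (x (n+1)) (x (n+2))
      have h8 := hA _ (hnn (x n) (x (n+1))) (by linarith) (by linarith)
      change d (x (n+1)) (x (n+2)) < _ at h2
      rcases le_max_iff.1 h with h | h <;> linarith
  have hboth : ∀ κ, 0 < κ → ∃ p, ∀ n, p ≤ n → d (x n) (x (n+1)) < δ + κ ∧
      δ - κ < d (x n) (x n) ∧ d (x n) (x n) < δ + κ := by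
    intro κ hκ
    obtain ⟨p, hp⟩ := hdlt κ hκ
    obtain ⟨q, hq⟩ := hrgt κ hκ
    refine ⟨max p q, fun n hn => ?_⟩
    have h1 := hp n (by omega)
    exact ⟨h1, hq n (by omega), lt_of_le_of_lt (hl _ _) h1⟩
  have hcau : ∀ ε, 0 < ε → ∃ p, ∀ m, p ≤ m → ∀ k, d (x m) (x (m+k)) < δ + ε := by
    intro ε hε
    obtain ⟨η, c, hη, hc, hA⟩ := hA (δ + ε) (by linarith)
    obtain ⟨κ, hκ, hκ1, hκ2⟩ : ∃ κ, 0 < κ ∧ 8 * κ ≤ η ∧ 8 * κ ≤ ε :=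
      ⟨min η ε / 8, by positivity, by linarith [min_le_left η ε], by linarith [min_le_right η ε]⟩
    obtain ⟨p, hp⟩ := hboth κ hκ
    refine ⟨p + 1, fun m hm k => ?_⟩
    obtain ⟨m, rfl⟩ : ∃ m', m = m' + 1 := ⟨m - 1, by omega⟩
    induction k with
    | zero =>
      have := (hp (m+1) (by omega)).2.2
      simp only [add_zero]
      linarith
    | succ k ih =>
      by_contra! hcon
      obtain ⟨a1, a2, a3⟩ := hp m (by omega)
      obtain ⟨a1', a2', a3'⟩ := hp (m+1) (by omega)
      obtain ⟨b1, b2, b3⟩ := hp (m+1+k) (by omega)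
      have hTT := hT (x m) (x (m+1+k))
      unfold Mfun at hTT
      have hM0 := hMnn (x m) (x (m+1+k))
      unfold Mfun at hM0
      rw [← hx m, ← hx (m+1+k)] at hTT hM0
      change δ + ε ≤ d (x (m+1)) (x (m+1+k+1)) at hcon
      generalize x (m+1+k+1) = Tb at *
      generalize x (m+1+k) = b at *
      generalize x (m+1) = Ta at *
      generalize x m = a at *
      have t1 := htri a Ta b
      have t2 := htri Ta a Tb
      have t3 := htri a b Tb
      rw [hsym Ta a] at t2
      have e1 : max (max (d a b) (max (d a Ta) (d b Tb))) ((d a Tb + d Ta b) / 2) < δ + ε + η := by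
        refine max_lt (max_lt ?_ (max_lt ?_ ?_)) ?_ <;> linarith
      have e2 : δ + ε - η < max (max (d a b) (max (d a Ta) (d b Tb))) ((d a Tb + d Ta b) / 2) := by
        refine lt_of_lt_of_le ?_ ((le_max_left _ _).trans (le_max_left _ _))
        linarith
      have e3 := hA _ hM0 e2 e1
      rcases le_max_iff.1 hTT with h | h <;> linarith
  obtain ⟨w, hw⟩ := hcomp x (by
    intro α hα
    obtain ⟨p, hp⟩ := hcau (α / 4) (by linarith)
    obtain ⟨q, hq⟩ := hrgt (α / 4) (by linarith)
    refine ⟨max p q, fun m n hm hn => ?_⟩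
    have h1 := hq m (by omega)
    have h2 := hq n (by omega)
    have h3 : d (x m) (x n) < δ + α / 4 := by
      rcases le_total m n with h | h
      · obtain ⟨k, rfl⟩ := Nat.exists_eq_add_of_le h
        exact hp m (by omega) k
      · obtain ⟨k, rfl⟩ := Nat.exists_eq_add_of_le h
        rw [hsym]
        exact hp n (by omega) k
    unfold assocE
    linarith)
  have hwlt : ∀ κ, 0 < κ → ∃ p, ∀ n, p ≤ n → assocE d (x n) w < κ := by
    intro κ hκ
    exact eventually_atTop.1 (hw.eventually_lt_const hκ)
  have hww : d w w = δ := by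
    apply eq_of_abs_sub_le_all
    intro ε hε
    obtain ⟨p, hp⟩ := hwlt (ε / 2) (by linarith)
    obtain ⟨q, hq⟩ := hboth (ε / 2) (by linarith)
    have h1 := hp (max p q) (le_max_left _ _)
    obtain ⟨-, h2, h3⟩ := hq (max p q) (le_max_right _ _)
    have h4 := hl (x (max p q)) w
    have h5 := hr (x (max p q)) w
    unfold assocE at h1
    rw [abs_le]
    constructor <;> linarith
  refine ⟨w, ?_, fun n => hww ▸ hδle n⟩
  by_contra hne
  have hL : δ < d w (T w) := hww ▸ lt_of_le_of_ne (hl _ _) (Ne.symm hne)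
  have hφL := hlt _ (lt_of_le_of_lt hδ0 hL)
  obtain ⟨κ, hκ, hκ1, hκ2⟩ : ∃ κ, 0 < κ ∧ 8 * κ ≤ d w (T w) - δ ∧
      8 * κ ≤ d w (T w) - φ (d w (T w)) :=
    ⟨min (d w (T w) - δ) (d w (T w) - φ (d w (T w))) / 8,
      div_pos (lt_min (by linarith) (by linarith)) (by norm_num),
      by linarith [min_le_left (d w (T w) - δ) (d w (T w) - φ (d w (T w)))],
      by linarith [min_le_right (d w (T w) - δ) (d w (T w) - φ (d w (T w)))]⟩
  obtain ⟨p, hp⟩ := hwlt κ hκ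
  obtain ⟨q, hq⟩ := hboth κ hκ
  obtain ⟨n, hn1, hn2⟩ : ∃ n, p ≤ n ∧ q ≤ n := ⟨max p q, le_max_left _ _, le_max_right _ _⟩
  have p1 := hp n hn1
  have p2 := hp (n+1) (by omega)
  obtain ⟨a1, a2, a3⟩ := hq n hn2
  obtain ⟨-, b2, b3⟩ := hq (n+1) (by omega)
  have hTT := hT (x n) w
  unfold Mfun at hTT
  unfold assocE at p1 p2
  rw [← hx n] at hTT
  have t1 := htri (x n) w (T w)
  have t2 := htri w (x (n+1)) (T w)
  rw [hsym w (x (n+1))] at t2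
  have hMe : max (max (d (x n) w) (max (d (x n) (x (n+1))) (d w (T w))))
      ((d (x n) (T w) + d (x (n+1)) w) / 2) = d w (T w) := by
    apply le_antisymm
    · refine max_le (max_le ?_ (max_le ?_ ?_)) ?_ <;> linarith
    · exact (le_max_right _ _).trans ((le_max_right _ _).trans (le_max_left _ _))
  rw [hMe] at hTT
  rcases le_max_iff.1 hTT with h | h <;> linarith

/-- a `d`-fixed point realizing `θ = inf {d(z,z) : z d-fixed}` is a
genuine fixed point. -/
theorem fixed_of_dFixed_min {X : Type*} [Nonempty X] (d : X → X → ℝ)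
    (hd : IsPartialMetric d) (hcomp : eComplete d)
    (φ : ℝ → ℝ) (hφ : IsLimitNormal φ) (hψ : SemiCoercive (fun t => t - φ t))
    (T : X → X)
    (hT : ∀ x y : X, d (T x) (T y) ≤
      max (φ (Mfun d T x y)) ((d x x + d y y) / 2))
    (θ : ℝ) (hθ : θ = sInf {r : ℝ | ∃ z : X, d z (T z) = d z z ∧ r = d z z})
    (z : X) (hz : d z (T z) = d z z) (hzθ : d z z = θ) :
    T z = z := by
  by_contra hne
  have hd' := hd
  obtain ⟨hnn, hsym, hmax, htri, heq⟩ := hd'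
  obtain ⟨w, hw, hwle⟩ := orbit_aux d hd hcomp φ hφ T hT (fun n => T^[n] z)
    (fun n => Function.iterate_succ_apply' T n z)
  have h1 : d w w ≤ d (T z) (T (T z)) := hwle 1
  have h0 : d (T z) (T z) ≤ d z (T z) := (le_max_right _ _).trans (hmax _ _)
  have h2 : d (T z) (T z) < d z z := by
    rcases (hz ▸ h0).lt_or_eq with h | h
    · exact h
    · exact absurd (heq z (T z) hz (hz.trans h.symm)).symm hne
  have h3 : θ ≤ d w w := by
    rw [hθ]
    refine csInf_le ⟨0, ?_⟩ ⟨w, hw, rfl⟩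
    rintro _ ⟨v, -, rfl⟩
    exact hnn v v
  have h4 : d z z ≤ d (T z) (T (T z)) := by linarith
  have h5 := hT z (T z)
  have hM : Mfun d T z (T z) = d (T z) (T (T z)) := by
    unfold Mfun
    have := htri z (T z) (T (T z))
    apply le_antisymm
    · refine max_le (max_le ?_ (max_le ?_ ?_)) ?_ <;> linarith
    · exact (le_max_right _ _).trans ((le_max_right _ _).trans (le_max_left _ _))
  rw [hM] at h5
  have h6 := hφ.1.2.2 (d (T z) (T (T z))) (by linarith [hnn (T z) (T z)])
  rcases le_max_iff.1 h5 with h | h <;> linarith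
end
end

section
/- Let d be a partial metric on a nonempty set X, let φ : [0,∞) → [0,∞) be normal, and let T : X → X be (M;b;φ)-contractive, i.e., d(Tx,Ty) ≤ max{φ(M(x,y)), b(x,y)} for all x, y ∈ X. Then T has at most one fixed point: if Tu = u and Tv = v, then u = v. -/
open Filter Topology

noncomputable section

/-- an `(M;b;φ)`-contractive map has at most one fixed point. -/
theorem fixedPoint_unique {X : Type*} [Nonempty X] (d : X → X → ℝ)
    (hd : IsPartialMetric d) (φ : ℝ → ℝ) (hφ : IsNormal φ)
    (T : X → X)
    (hT : ∀ x y : X, d (T x) (T y) ≤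
      max (φ (Mfun d T x y)) ((d x x + d y y) / 2))
    (u v : X) (hu : T u = u) (hv : T v = v) :
    u = v := by
  obtain ⟨h0, hs, hm, ht, he⟩ := hd
  obtain ⟨_, p0, p1⟩ := hφ
  have hm1 : d u u ≤ d u v := le_trans (le_max_left _ _) (hm u v)
  have hm2 : d v v ≤ d u v := le_trans (le_max_right _ _) (hm u v)
  have hM : Mfun d T u v = d u v := by
    unfold Mfun
    rw [hu, hv, max_eq_left (max_le hm1 hm2), add_self_div_two, max_self]
  have h := hT u v
  rw [hM, hu, hv] at h
  rcases (h0 u v).eq_or_lt with hz | hz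
  · have a := h0 u u
    have b := h0 v v
    exact he u v (by linarith) (by linarith)
  · have hp := p1 _ hz
    rcases le_max_iff.mp h with h | h
    · linarith
    · exact he u v (by linarith) (by linarith)
end
end

section
/- Let d be a partial metric on a nonempty set X whose associated metric space (X,e) is complete, let φ : [0,∞) → [0,∞) be limit normal with ψ(t) := t − φ(t) semi-coercive, and let T : X → X be (M;b;φ)-contractive, i.e., d(Tx,Ty) ≤ max{φ(M(x,y)), b(x,y)} for all x, y ∈ X. Set θ := inf{d(z,z) : z ∈ X, d(z,Tz) = d(z,z)}. Then the infimum θ is attained: there exists z ∈ X with d(z,Tz) = d(z,z) and d(z,z) = θ. -/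
open Filter Topology

noncomputable section

lemma semi_bound {ψ : ℝ → ℝ} (h : SemiCoercive ψ) :
    ∃ α δ : ℝ, 0 < δ ∧ ∀ t, α ≤ t → δ ≤ ψ t := by
  unfold SemiCoercive liminfAtInfty at h
  obtain ⟨⟨α, hα⟩, h1⟩ := lt_iSup_iff.1 h
  obtain ⟨δ, h2, h3⟩ := EReal.lt_iff_exists_real_btwn.1 h1
  refine ⟨α, δ, by exact_mod_cast h2, fun t ht => ?_⟩
  have h4 := h3.le.trans (iInf_le (fun t : {t : ℝ // α ≤ t} => ((ψ t : ℝ) : EReal)) ⟨t, ht⟩)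
  exact_mod_cast h4

lemma local_bound {φ : ℝ → ℝ} (hφ : IsLimitNormal φ) {s : ℝ} (hs : 0 < s) :
    ∃ ε δ : ℝ, 0 < ε ∧ 0 < δ ∧ ∀ t, 0 ≤ t → s - ε < t → t < s + ε → φ t ≤ t - δ := by
  obtain ⟨⟨h0, hz, hn⟩, hl⟩ := hφ
  have h := hl s hs
  unfold limsupAt at h
  obtain ⟨y, ⟨ε, hε, rfl⟩, hy⟩ := exists_lt_of_csInf_lt (by exact ⟨_, 1, one_pos, rfl⟩) h
  set c := sSup (φ '' (Set.Ioo (s - ε) (s + ε) ∩ Set.Ici 0)) with hc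
  have hb : BddAbove (φ '' (Set.Ioo (s - ε) (s + ε) ∩ Set.Ici 0)) := by
    refine ⟨s + ε, ?_⟩
    rintro _ ⟨t, ⟨⟨_, h2⟩, h3⟩, rfl⟩
    rcases (show (0:ℝ) ≤ t from h3).eq_or_lt with h | h
    · rw [← h, hz]; linarith
    · linarith [hn t h]
  refine ⟨min ε ((s - c) / 2), (s - c) / 2, lt_min hε (by linarith), by linarith, ?_⟩
  intro t ht h1 h2
  have e1 := min_le_left ε ((s - c) / 2)
  have e2 := min_le_right ε ((s - c) / 2)
  have : φ t ≤ c := le_csSup hb ⟨t, ⟨⟨by linarith, by linarith⟩, ht⟩, rfl⟩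
  linarith

lemma unif_bound {φ : ℝ → ℝ} (hφ : IsLimitNormal φ) (hψ : SemiCoercive (fun t => t - φ t))
    {η : ℝ} (hη : 0 < η) : ∃ δ : ℝ, 0 < δ ∧ ∀ t, η ≤ t → φ t ≤ t - δ := by
  obtain ⟨α, δ0, hδ0, h0⟩ := semi_bound hψ
  have key : ∃ δ : ℝ, 0 < δ ∧ ∀ t ∈ Set.Icc η α, φ t ≤ t - δ := by
    refine isCompact_Icc.induction_on (p := fun S => ∃ δ : ℝ, 0 < δ ∧ ∀ t ∈ S, φ t ≤ t - δ)
      ⟨1, one_pos, by simp⟩ ?_ ?_ ?_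
    · rintro s t hst ⟨δ, h1, h2⟩
      exact ⟨δ, h1, fun x hx => h2 x (hst hx)⟩
    · rintro s t ⟨δ, h1, h2⟩ ⟨δ', h1', h2'⟩
      refine ⟨min δ δ', lt_min h1 h1', ?_⟩
      rintro x (hx | hx)
      · linarith [h2 x hx, min_le_left δ δ']
      · linarith [h2' x hx, min_le_right δ δ']
    · intro s hs
      obtain ⟨ε, δ, hε, hδ, h⟩ := local_bound hφ (lt_of_lt_of_le hη hs.1)
      refine ⟨Set.Ioo (s - ε) (s + ε) ∩ Set.Icc η α, ?_, δ, hδ, ?_⟩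
      · exact Filter.inter_mem
          (mem_nhdsWithin_of_mem_nhds (Ioo_mem_nhds (by linarith) (by linarith)))
          self_mem_nhdsWithin
      · rintro t ⟨h1, h2⟩
        exact h t (by linarith [h2.1]) h1.1 h1.2
  obtain ⟨δ, hδ, h⟩ := key
  refine ⟨min δ δ0, lt_min hδ hδ0, fun t ht => ?_⟩
  rcases le_total t α with h1 | h1
  · linarith [h t ⟨ht, h1⟩, min_le_left δ δ0]
  · have := h0 t h1
    linarith [min_le_right δ δ0]

/-- the infimum `θ` of self-distances of `d`-fixed points is attained. -/
theorem dFixed_min_attained {X : Type*} [Nonempty X] (d : X → X → ℝ)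
    (hd : IsPartialMetric d) (hcomp : eComplete d)
    (φ : ℝ → ℝ) (hφ : IsLimitNormal φ) (hψ : SemiCoercive (fun t => t - φ t))
    (T : X → X)
    (hT : ∀ x y : X, d (T x) (T y) ≤
      max (φ (Mfun d T x y)) ((d x x + d y y) / 2))
    (θ : ℝ) (hθ : θ = sInf {r : ℝ | ∃ z : X, d z (T z) = d z z ∧ r = d z z}) :
    ∃ z : X, d z (T z) = d z z ∧ d z z = θ := by
  obtain ⟨hnn, hsym, hmax, htri, -⟩ := hd
  have hl : ∀ x y, d x x ≤ d x y := fun x y => (le_max_left _ _).trans (hmax x y)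
  have hr : ∀ x y, d y y ≤ d x y := fun x y => (le_max_right _ _).trans (hmax x y)
  have hub : ∀ η : ℝ, 0 < η → ∃ δ : ℝ, 0 < δ ∧ ∀ t, η ≤ t → φ t ≤ t - δ :=
    fun η hη => unif_bound hφ hψ hη
  have hz : φ 0 = 0 := hφ.1.2.1
  have hlt : ∀ t, 0 < t → φ t < t := hφ.1.2.2
  -- upper bound tool for M
  have hMle : ∀ x y c, d x y ≤ c → d x (T x) ≤ c → d y (T y) ≤ c →
      d x (T y) + d (T x) y ≤ 2 * c → Mfun d T x y ≤ c := by
    intro x y c h1 h2 h3 h4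
    exact max_le (max_le h1 (max_le h2 h3)) (by linarith)
  have hMge1 : ∀ x y, d x y ≤ Mfun d T x y := fun x y =>
    (le_max_left _ _).trans (le_max_left _ _)
  have hMge3 : ∀ x y, d y (T y) ≤ Mfun d T x y := fun x y =>
    ((le_max_right _ _).trans (le_max_right _ _)).trans (le_max_left _ _)
  -- one step
  have hstep : ∀ x, d (T x) (T (T x)) ≤
      max (φ (d x (T x))) ((d x x + d (T x) (T x)) / 2) := by
    intro x
    have h := hT x (T x)
    have htr := htri x (T x) (T (T x))
    rcases le_or_gt (d (T x) (T (T x))) (d x (T x)) with hc | hc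
    · have : Mfun d T x (T x) = d x (T x) :=
        le_antisymm (hMle _ _ _ le_rfl le_rfl hc (by linarith)) (hMge1 _ _)
      rwa [this] at h
    · exfalso
      have : Mfun d T x (T x) = d (T x) (T (T x)) :=
        le_antisymm (hMle _ _ _ hc.le hc.le le_rfl (by linarith)) (hMge3 _ _)
      rw [this] at h
      have hp := hlt _ ((hnn x (T x)).trans_lt hc)
      have h1 := hl x (T x)
      have h2 := hr x (T x)
      exact absurd h (not_le.2 (max_lt hp (by linarith)))
  -- infimum
  set S : Set ℝ := Set.range (fun x => d x (T x)) with hS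
  have hSne : S.Nonempty := Set.range_nonempty _
  have hSb : BddBelow S := ⟨0, by rintro _ ⟨x, rfl⟩; exact hnn _ _⟩
  set D : ℝ := sInf S with hDdef
  have hD0 : 0 ≤ D := le_csInf hSne (by rintro _ ⟨x, rfl⟩; exact hnn _ _)
  have hDle : ∀ x, D ≤ d x (T x) := fun x => csInf_le hSb ⟨x, rfl⟩
  -- lemma A
  have hA : ∀ ε > 0, ∃ δ > 0, ∀ x, d x (T x) < D + δ → D - ε < d x x ∧ D - ε < d (T x) (T x) := by
    intro ε hε
    rcases hD0.eq_or_lt with h0 | h0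
    · refine ⟨1, one_pos, fun x _ => ⟨?_, ?_⟩⟩
      · linarith [hnn x x]
      · linarith [hnn (T x) (T x)]
    · obtain ⟨δ, hδ, h⟩ := hub D h0
      refine ⟨min δ ε, lt_min hδ hε, fun x hx => ?_⟩
      have e1 := min_le_left δ ε
      have e2 := min_le_right δ ε
      have h1 := h _ (hDle x)
      have h2 := hDle (T x)
      have h3 := hl x (T x)
      have h4 := hr x (T x)
      rcases le_max_iff.1 (h2.trans (hstep x)) with h5 | h5
      · linarith
      · constructor <;> linarith
  have hseq : ∀ n : ℕ, ∃ x, d x (T x) < D + 1 / ((n : ℝ) + 1) := by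
    intro n
    obtain ⟨_, ⟨x, rfl⟩, hx⟩ := exists_lt_of_csInf_lt hSne
      (show sInf S < D + 1 / ((n : ℝ) + 1) by
        have : (0:ℝ) < 1 / ((n : ℝ) + 1) := by positivity
        linarith)
    exact ⟨x, hx⟩
  choose u hu using hseq
  -- everything is eventually close to D
  have hev : ∀ ε > 0, ∃ N, ∀ n ≥ N, d (u n) (T (u n)) < D + ε ∧ D - ε < d (u n) (u n) ∧
      D - ε < d (T (u n)) (T (u n)) := by
    intro ε hε
    obtain ⟨δ, hδ, h⟩ := hA ε hε
    obtain ⟨N, hN⟩ := exists_nat_one_div_lt (lt_min hδ hε)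
    refine ⟨N, fun n hn => ?_⟩
    have h1 : 1 / ((n : ℝ) + 1) ≤ 1 / ((N : ℝ) + 1) := Nat.one_div_le_one_div hn
    have h2 := hu n
    have e1 := min_le_left δ ε
    have e2 := min_le_right δ ε
    exact ⟨by linarith, h _ (by linarith)⟩
  -- Cauchy
  have hC : ∀ η > 0, ∃ N, ∀ m n, N ≤ m → N ≤ n → d (u m) (u n) < D + η := by
    intro η hη
    obtain ⟨δ, hδ, hb⟩ := hub η hη
    set ε := min δ η / 10 with hεd
    have hε : 0 < ε := by have := lt_min hδ hη; positivity
    have e1 : 10 * ε ≤ δ := by have := min_le_left δ η; linarith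
    have e2 : 10 * ε ≤ η := by have := min_le_right δ η; linarith
    obtain ⟨N, hN⟩ := hev ε hε
    refine ⟨N, fun m n hm hn => ?_⟩
    by_contra hcon
    push Not at hcon
    obtain ⟨a1, a2, a3⟩ := hN m hm
    obtain ⟨b1, b2, b3⟩ := hN n hn
    have t1 := htri (u m) (T (u m)) (u n)
    have t2 := htri (T (u m)) (T (u n)) (u n)
    have t3 := htri (u m) (u n) (T (u n))
    have t4 := htri (T (u m)) (u m) (u n)
    rw [hsym (T (u n)) (u n)] at t2
    rw [hsym (T (u m)) (u m)] at t4
    have hM : Mfun d T (u m) (u n) ≤ d (u m) (u n) + 2 * ε :=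
      hMle _ _ _ (by linarith) (by linarith) (by linarith) (by linarith)
    have hM1 := hMge1 (u m) (u n)
    have hφM := hb (Mfun d T (u m) (u n)) (by linarith)
    have c1 := hl (u m) (T (u m))
    have c2 := hl (u n) (T (u n))
    rcases le_max_iff.1 (hT (u m) (u n)) with h5 | h5 <;> linarith
  obtain ⟨z, hzlim⟩ := hcomp u (by
    intro α hα
    obtain ⟨N1, h1⟩ := hC (α / 4) (by positivity)
    obtain ⟨N2, h2⟩ := hev (α / 4) (by positivity)
    refine ⟨max N1 N2, fun m n hm hn => ?_⟩
    have a := h1 m n (le_of_max_le_left hm) (le_of_max_le_left hn)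
    have b := (h2 m (le_of_max_le_right hm)).2.1
    have c := (h2 n (le_of_max_le_right hn)).2.1
    unfold assocE
    linarith)
  have hzev : ∀ ε > 0, ∃ N, ∀ n ≥ N, assocE d (u n) z < ε := fun ε hε =>
    eventually_atTop.1 (hzlim.eventually (gt_mem_nhds hε))
  have hzz : d z z = D := by
    apply eq_of_forall_dist_le
    intro ε hε
    obtain ⟨N1, h1⟩ := hev (ε / 2) (by positivity)
    obtain ⟨N2, h2⟩ := hzev (ε / 2) (by positivity)
    obtain ⟨a1, a2, -⟩ := h1 (max N1 N2) (le_max_left _ _)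
    have a3 := h2 (max N1 N2) (le_max_right _ _)
    unfold assocE at a3
    have a4 := hl (u (max N1 N2)) z
    have a5 := hr (u (max N1 N2)) z
    have a6 := hl (u (max N1 N2)) (T (u (max N1 N2)))
    rw [Real.dist_eq, abs_le]
    constructor <;> linarith
  have hzT : d z (T z) = D := by
    by_contra hne
    have hs : D < d z (T z) := lt_of_le_of_ne (hDle z) (Ne.symm hne)
    obtain ⟨δ, hδ, hb⟩ := hub (d z (T z)) (by linarith)
    set ε := min δ (d z (T z) - D) / 20 with hεd
    have hε : 0 < ε := by have := lt_min hδ (sub_pos.2 hs); positivity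
    have e1 : 20 * ε ≤ δ := by have := min_le_left δ (d z (T z) - D); linarith
    have e2 : 20 * ε ≤ d z (T z) - D := by
      have := min_le_right δ (d z (T z) - D); linarith
    obtain ⟨N1, h1⟩ := hev ε hε
    obtain ⟨N2, h2⟩ := hzev ε hε
    obtain ⟨a1, a2, a3⟩ := h1 (max N1 N2) (le_max_left _ _)
    have a4 := h2 (max N1 N2) (le_max_right _ _)
    unfold assocE at a4
    generalize u (max N1 N2) = v at *
    have c1 := hl v z
    have c2 := hr v z
    have c3 := hl v (T v)
    have t1 := htri v z (T z)
    have t2 := htri (T v) v z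
    have t3 := htri z v (T z)
    have t4 := htri v (T v) (T z)
    rw [hsym (T v) v] at t2
    rw [hsym z v] at t3
    have hM : Mfun d T v z ≤ d z (T z) + 2 * ε :=
      hMle _ _ _ (by linarith) (by linarith) (by linarith) (by linarith)
    have hφM := hb (Mfun d T v z) (hMge3 v z)
    rcases le_max_iff.1 (hT v z) with h5 | h5 <;> linarith
  refine ⟨z, by rw [hzz, hzT], ?_⟩
  rw [hθ, hzz]
  symm
  refine IsLeast.csInf_eq ⟨⟨z, by rw [hzz, hzT], hzz.symm⟩, ?_⟩
  rintro _ ⟨w, hw, rfl⟩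
  rw [← hw]
  exact hDle w
end
end

section
/- Let d be a partial metric on a nonempty set X whose associated metric space (X,e) is complete, let φ : [0,∞) → [0,∞) be limit normal with ψ(t) := t − φ(t) semi-coercive, and let T : X → X be (M;b;φ)-contractive, i.e., d(Tx,Ty) ≤ max{φ(M(x,y)), b(x,y)} for all x, y ∈ X. Then T has a unique fixed point: there exists exactly one z ∈ X with Tz = z. -/
open Filter Topology

noncomputable section

theorem psi_pos (φ : ℝ → ℝ) (hφ : IsLimitNormal φ) (hψ : SemiCoercive (fun t => t - φ t))
    (s : ℝ) (hs : 0 < s) : ∃ δ : ℝ, 0 < δ ∧ ∀ t, s ≤ t → φ t ≤ t - δ := by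
  obtain ⟨⟨h0, h00, hlt⟩, hl⟩ := hφ
  have hle : ∀ t, 0 ≤ t → φ t ≤ t := by
    intro t ht
    rcases ht.eq_or_lt with h | h
    · rw [← h, h00]
    · exact (hlt t h).le
  have inf : ∃ α δ : ℝ, 0 < δ ∧ ∀ t, α ≤ t → φ t ≤ t - δ := by
    unfold SemiCoercive liminfAtInfty at hψ
    obtain ⟨α, hα⟩ := lt_iSup_iff.1 hψ
    obtain ⟨δ, h1, h2⟩ := EReal.lt_iff_exists_real_btwn.1 hα
    refine ⟨α, δ, by exact_mod_cast h1, fun t ht => ?_⟩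
    have h3 := h2.le.trans (iInf_le _ (⟨t, ht⟩ : {t : ℝ // (α : ℝ) ≤ t}))
    have h4 : δ ≤ t - φ t := by exact_mod_cast h3
    linarith
  obtain ⟨α, δ0, hδ0, hα⟩ := inf
  have loc : ∃ δ : ℝ, 0 < δ ∧ ∀ t ∈ Set.Icc s α, φ t ≤ t - δ := by
    refine (isCompact_Icc (a := s) (b := α)).induction_on
      (p := fun S => ∃ δ : ℝ, 0 < δ ∧ ∀ t ∈ S, φ t ≤ t - δ) ?_ ?_ ?_ ?_
    · exact ⟨1, one_pos, by simp⟩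
    · rintro A B hAB ⟨δ, h1, h2⟩
      exact ⟨δ, h1, fun t ht => h2 t (hAB ht)⟩
    · rintro A B ⟨δ, h1, h2⟩ ⟨δ', h1', h2'⟩
      refine ⟨min δ δ', lt_min h1 h1', ?_⟩
      rintro t (ht | ht)
      · linarith [h2 t ht, min_le_left δ δ']
      · linarith [h2' t ht, min_le_right δ δ']
    · intro p hp
      have hp0 : 0 < p := hs.trans_le hp.1
      have h := hl p hp0
      unfold limsupAt at h
      obtain ⟨y, ⟨ε, hε, rfl⟩, hy⟩ := exists_lt_of_csInf_lt (by exact ⟨_, 1, one_pos, rfl⟩) h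
      set c := sSup (φ '' (Set.Ioo (p - ε) (p + ε) ∩ Set.Ici 0)) with hc
      have hb : BddAbove (φ '' (Set.Ioo (p - ε) (p + ε) ∩ Set.Ici 0)) := by
        refine ⟨p + ε, ?_⟩
        rintro _ ⟨t, ⟨ht1, ht2⟩, rfl⟩
        exact (hle t ht2).trans ht1.2.le
      have hm : 0 < min ε ((p - c) / 2) := lt_min hε (by linarith)
      refine ⟨Set.Icc s α ∩ Set.Ioo (p - min ε ((p - c) / 2)) (p + min ε ((p - c) / 2)),
        inter_mem_nhdsWithin _ (Ioo_mem_nhds (by linarith) (by linarith)), (p - c) / 2,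
        by linarith, ?_⟩
      rintro t ⟨ht1, ht2, ht3⟩
      have e1 := min_le_left ε ((p - c) / 2)
      have e2 := min_le_right ε ((p - c) / 2)
      have : φ t ≤ c := le_csSup hb ⟨t, ⟨⟨by linarith, by linarith⟩, hs.le.trans ht1.1⟩, rfl⟩
      linarith
  obtain ⟨δ, hδ, h⟩ := loc
  refine ⟨min δ δ0, lt_min hδ hδ0, fun t ht => ?_⟩
  rcases le_total t α with h' | h'
  · linarith [h t ⟨ht, h'⟩, min_le_left δ δ0]
  · linarith [hα t h', min_le_right δ δ0]

/-- an `(M;b;φ)`-contractive map on a complete space, with `φ` limit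
normal and `t ↦ t - φ(t)` semi-coercive, has a unique fixed point. -/
theorem exists_unique_fixedPoint {X : Type*} [Nonempty X] (d : X → X → ℝ)
    (hd : IsPartialMetric d) (hcomp : eComplete d)
    (φ : ℝ → ℝ) (hφ : IsLimitNormal φ) (hψ : SemiCoercive (fun t => t - φ t))
    (T : X → X)
    (hT : ∀ x y : X, d (T x) (T y) ≤
      max (φ (Mfun d T x y)) ((d x x + d y y) / 2)) :
    ∃! z : X, T z = z := by
  obtain ⟨hnn, hsym, hself, htri, hsep⟩ := hd
  have hsl : ∀ x y, d x x ≤ d x y := fun x y => (le_max_left _ _).trans (hself x y)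
  have hsr : ∀ x y, d y y ≤ d x y := fun x y => (le_max_right _ _).trans (hself x y)
  have key := psi_pos φ hφ hψ
  obtain ⟨⟨h0, h00, hlt⟩, -⟩ := hφ
  have M1 : ∀ x y, d x y ≤ Mfun d T x y := fun x y =>
    (le_max_left _ _).trans (le_max_left _ _)
  have M2 : ∀ x y, d y (T y) ≤ Mfun d T x y := fun x y =>
    ((le_max_right _ _).trans (le_max_right _ _)).trans (le_max_left _ _)
  have Mle : ∀ x y B, d x y ≤ B → d x (T x) ≤ B → d y (T y) ≤ B →
      (d x (T y) + d (T x) y) / 2 ≤ B → Mfun d T x y ≤ B := fun x y B a b c e =>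
    max_le (max_le a (max_le b c)) e
  -- infimum
  obtain ⟨ρ, hρ1, hρ2⟩ : ∃ ρ : ℝ, (∀ x, ρ ≤ d x (T x)) ∧
      ∀ η, 0 < η → ∃ x, d x (T x) < ρ + η := by
    have hb : BddBelow (Set.range fun x => d x (T x)) := ⟨0, by
      rintro _ ⟨x, rfl⟩
      exact hnn _ _⟩
    refine ⟨⨅ x, d x (T x), fun x => ciInf_le hb x, fun η hη => ?_⟩
    exact exists_lt_of_ciInf_lt (by linarith)
  have hρ0 : 0 ≤ ρ := by
    by_contra hc
    obtain ⟨x, hx⟩ := hρ2 (-ρ) (by linarith)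
    linarith [hnn x (T x)]
  -- consecutive step
  have step : ∀ x, Mfun d T x (T x) = max (d x (T x)) (d (T x) (T (T x))) := by
    intro x
    refine le_antisymm (Mle _ _ _ (le_max_left _ _) (le_max_left _ _) (le_max_right _ _) ?_)
      (max_le (M1 _ _) (M2 _ _))
    have h1 := htri x (T x) (T (T x))
    have h2 := le_max_left (d x (T x)) (d (T x) (T (T x)))
    have h3 := le_max_right (d x (T x)) (d (T x) (T (T x)))
    linarith
  have mono : ∀ x, d (T x) (T (T x)) ≤ d x (T x) := by
    intro x
    by_contra! hc
    have h1 := hT x (T x)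
    rw [step, max_eq_right hc.le] at h1
    have h2 := hlt (d (T x) (T (T x))) ((hnn _ _).trans_lt hc)
    rcases le_max_iff.1 h1 with h | h
    · linarith
    · linarith [hsl x (T x), hsr x (T x)]
  have hT' : ∀ x, d (T x) (T (T x)) ≤ max (φ (d x (T x))) ((d x x + d (T x) (T x)) / 2) := by
    intro x
    have h1 := hT x (T x)
    rwa [step, max_eq_left (mono x)] at h1
  have good : ∀ η, 0 < η → ∃ u, d u (T u) ≤ ρ + η ∧ ρ - η ≤ d u u ∧ ρ - η ≤ d (T u) (T u) := by
    intro η hη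
    rcases hρ0.eq_or_lt with h | h
    · obtain ⟨u, hu⟩ := hρ2 η hη
      exact ⟨u, hu.le, by linarith [hnn u u], by linarith [hnn (T u) (T u)]⟩
    · obtain ⟨δ, hδ, hk⟩ := key ρ h
      obtain ⟨u, hu⟩ := hρ2 (min η δ) (lt_min hη hδ)
      have e1 := min_le_left η δ
      have e2 := min_le_right η δ
      have h1 := hk _ (hρ1 u)
      have h2 := hρ1 (T u)
      have h3 := hsl u (T u)
      have h4 := hsr u (T u)
      rcases le_max_iff.1 (hT' u) with h' | h'
      · linarith
      · exact ⟨u, by linarith, by linarith, by linarith⟩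
  have close : ∀ ε, 0 < ε → ∃ η, 0 < η ∧ η ≤ ε ∧ ∀ u v,
      d u (T u) ≤ ρ + η → ρ - η ≤ d u u → ρ - η ≤ d (T u) (T u) →
      d v (T v) ≤ ρ + η → ρ - η ≤ d v v → ρ - η ≤ d (T v) (T v) → d u v ≤ ρ + ε := by
    intro ε hε
    obtain ⟨δ, hδ, hk⟩ := key (ρ + ε) (by linarith)
    obtain ⟨η, hη, hη1, hη2⟩ : ∃ η, 0 < η ∧ 10 * η ≤ δ ∧ 10 * η ≤ ε :=
      ⟨min δ ε / 10, by
        have : 0 < min δ ε := lt_min hδ hε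
        linarith, by linarith [min_le_left δ ε], by linarith [min_le_right δ ε]⟩
    refine ⟨η, hη, by linarith, ?_⟩
    intro u v a1 a2 a3 b1 b2 b3
    by_contra! hc
    have t1 := htri u (T u) v
    have t2 := htri (T u) (T v) v
    have t3 := htri u v (T v)
    have t4 := htri (T u) u v
    have s1 := hsym (T u) u
    have s2 := hsym (T v) v
    have hM : Mfun d T u v ≤ d u v + 2 * η :=
      Mle _ _ _ (by linarith) (by linarith) (by linarith) (by linarith)
    have h1 := hk _ (hc.le.trans (M1 u v))
    have r1 := hsl u (T u)
    have r2 := hsl v (T v)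
    rcases le_max_iff.1 (hT u v) with h | h
    · linarith
    · linarith
  choose u hu1 hu2 hu3 using fun k : ℕ => good (1 / ((k : ℝ) + 1)) (by positivity)
  have hev : ∀ η : ℝ, 0 < η → ∃ p : ℕ, ∀ k, p ≤ k →
      d (u k) (T (u k)) ≤ ρ + η ∧ ρ - η ≤ d (u k) (u k) ∧ ρ - η ≤ d (T (u k)) (T (u k)) := by
    intro η hη
    obtain ⟨p, hp⟩ := exists_nat_one_div_lt hη
    refine ⟨p, fun k hk => ?_⟩
    have := Nat.one_div_le_one_div (α := ℝ) hk
    exact ⟨by linarith [hu1 k], by linarith [hu2 k], by linarith [hu3 k]⟩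
  obtain ⟨z, hz⟩ := hcomp u (by
    intro α hα
    obtain ⟨η, hη, hηε, h⟩ := close (α / 8) (by linarith)
    obtain ⟨p, hp⟩ := hev η hη
    refine ⟨p, fun m n hm hn => ?_⟩
    obtain ⟨a1, a2, a3⟩ := hp m hm
    obtain ⟨b1, b2, b3⟩ := hp n hn
    have := h _ _ a1 a2 a3 b1 b2 b3
    unfold assocE
    linarith)
  have app : ∀ η, 0 < η → ∃ v, d v (T v) ≤ ρ + η ∧ ρ - η ≤ d v v ∧ ρ - η ≤ d (T v) (T v) ∧
      d v z ≤ d v v + η ∧ d v z ≤ d z z + η := by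
    intro η hη
    obtain ⟨p, hp⟩ := hev η hη
    obtain ⟨k, hk, hk'⟩ := ((hz.eventually_lt_const hη).and (eventually_ge_atTop p)).exists
    obtain ⟨a1, a2, a3⟩ := hp k hk'
    unfold assocE at hk
    exact ⟨u k, a1, a2, a3, by linarith [hsr (u k) z], by linarith [hsl (u k) z]⟩
  have hq : d z (T z) = ρ := by
    refine le_antisymm ?_ (hρ1 z)
    by_contra! hc
    obtain ⟨δ, hδ, hk⟩ := key (d z (T z)) (by linarith)
    obtain ⟨η, hη, hη1, hη2⟩ : ∃ η, 0 < η ∧ 10 * η ≤ δ ∧ 10 * η ≤ d z (T z) - ρ :=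
      ⟨min δ (d z (T z) - ρ) / 10, by
        have : 0 < min δ (d z (T z) - ρ) := lt_min hδ (by linarith)
        linarith, by linarith [min_le_left δ (d z (T z) - ρ)],
        by linarith [min_le_right δ (d z (T z) - ρ)]⟩
    obtain ⟨v, a1, a2, a3, a4, a5⟩ := app η hη
    have t1 := htri z v (T z)
    have t2 := htri v (T v) (T z)
    have t3 := htri v z (T z)
    have t4 := htri (T v) v z
    have s1 := hsym z v
    have s2 := hsym (T v) v
    have s3 := hsl v (T v)
    have s4 := hsr v z
    have hM : Mfun d T v z ≤ d z (T z) + 2 * η :=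
      Mle _ _ _ (by linarith) (by linarith) (by linarith) (by linarith)
    have h1 := hk _ (M2 v z)
    rcases le_max_iff.1 (hT v z) with h | h
    · linarith
    · linarith
  have hfix : T z = z := by
    have c1 := hsl z (T z)
    have c2 := hsr z (T z)
    have c3 := hnn z z
    have c4 := hnn (T z) (T z)
    rcases hρ0.eq_or_lt with h | h
    · exact (hsep z (T z) (by linarith) (by linarith)).symm
    · have h1 := hT' z
      have h2 := hρ1 (T z)
      have h3 := hlt ρ h
      rw [hq] at h1
      rcases le_max_iff.1 h1 with h' | h'
      · linarith
      · exact (hsep z (T z) (by linarith) (by linarith)).symm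
  refine ⟨z, hfix, fun w hw => ?_⟩
  change T w = w at hw
  have c1 := hsl w z
  have c2 := hsr w z
  have c3 := hnn z z
  have c4 := hnn w w
  have hM : Mfun d T w z = d w z := by
    refine le_antisymm (Mle _ _ _ le_rfl ?_ ?_ ?_) (M1 _ _)
    · rwa [hw]
    · rwa [hfix]
    · rw [hfix, hw]; linarith
  have h1 := hT w z
  rw [hM, hfix, hw] at h1
  rcases (hnn w z).eq_or_lt with h | h
  · exact hsep w z (by linarith) (by linarith)
  · have := hlt _ h
    rcases le_max_iff.1 h1 with h' | h'
    · linarith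
    · exact hsep w z (by linarith) (by linarith)
end
end
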